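/- Let G be a connected finite simple graph on a finite vertex type V with edge weights x : Sym2 V → ZMod 3, and let m be the least cardinality of a subset W ⊆ V with contracted spanning-tree sum s(G/W;x) ≠ 0. If W₁ and W₂ are two subsets of V, both of cardinality m, with s(G/W₁;x) ≠ 0 and s(G/W₂;x) ≠ 0, then s(G/W₁;x) = s(G/W₂;x) in ZMod 3. -/

import Mathlib

/-!
By the matrix-tree theorem for principal minors, `s(G/W;x)` is, for nonempty `W`, the minor
`det L[V \ W]` of the weighted Laplacian `L` (`contractedSum_eq_det`). To see this, expand the
determinant multilinearly in the rows `∑ z, x(vz) (e_v - e_z)`. This gives a sum over maps `f`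
choosing a "parent" `f v` for every `v ∉ W`; the term of `f` is its weight times `det (I - P_f)`,
which is `1` when following parents always leads to `W` and `0` otherwise. The parent maps that
lead to `W` correspond bijectively to the forests rooted at `W`
(`contractedSum_eq_sum_parentMap`).

If `m = 0`, both sets are empty. Otherwise minimality of `m` makes every principal minor of `L` of
size larger than `|V| - m` vanish (the full determinant vanishes anyway). For a symmetric matrix
this forces the Schur complement of the nonsingular block `L[V \ W₁]` to be zero
(`schur_eq_zero`), whence `det L[V \ W₁] * det L[V \ W₂]` is the square of the mixed minor
`det L[V \ W₂, V \ W₁]` (`det_eq_sq_mul_det`). The only nonzero square in `ZMod 3` is `1`, so the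
two minors agree.
-/

open scoped Classical

/-- The spanning-tree sum `s(G;x)`. -/
noncomputable def treeSum {V : Type*} [Fintype V] [DecidableEq V] (G : SimpleGraph V)
    (x : Sym2 V → ZMod 3) : ZMod 3 :=
  ∑ T ∈ Finset.univ.filter
      (fun T : SimpleGraph V => T ≤ G ∧ T.Connected ∧ T.IsAcyclic),
    ∏ e ∈ T.edgeFinset, x e

/-- The contracted spanning-tree sum `s(G/W;x)` for nonempty `W`. -/
noncomputable def contractedSum {V : Type*} [Fintype V] [DecidableEq V] (G : SimpleGraph V)
    (x : Sym2 V → ZMod 3) (W : Finset V) : ZMod 3 :=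
  ∑ F ∈ G.edgeFinset.powerset.filter (fun F =>
      (SimpleGraph.fromEdgeSet (↑F : Set (Sym2 V))).IsAcyclic ∧
      ∀ v : V, ∃! w : V, w ∈ W ∧
        (SimpleGraph.fromEdgeSet (↑F : Set (Sym2 V))).Reachable v w),
    ∏ e ∈ F, x e

/-- The contracted spanning-tree sum `s(G/W;x)` for arbitrary `W`
(for `W = ∅` it is the ordinary spanning-tree sum). -/
noncomputable def sCon {V : Type*} [Fintype V] [DecidableEq V] (G : SimpleGraph V)
    (x : Sym2 V → ZMod 3) (W : Finset V) : ZMod 3 :=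
  if W = ∅ then treeSum G x else contractedSum G x W

open scoped Matrix

set_option linter.unusedSectionVars false

/-- `contractedSum` with the summation variable ranging over finite edge sets: its defining sum
runs over their coercions to `Set (Sym2 V)`. -/
lemma contractedSum_eq_sum_finset {V : Type*} [Fintype V] [DecidableEq V] (G : SimpleGraph V)
    (x : Sym2 V → ZMod 3) (W : Finset V) :
    contractedSum G x W =
      ∑ F ∈ G.edgeFinset.powerset.filter (fun F : Finset (Sym2 V) =>
        (SimpleGraph.fromEdgeSet (↑F : Set (Sym2 V))).IsAcyclic ∧
        ∀ v : V, ∃! w : V, w ∈ W ∧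
          (SimpleGraph.fromEdgeSet (↑F : Set (Sym2 V))).Reachable v w),
      ∏ e ∈ F, x e := by
  symm
  refine Finset.sum_bij (fun F _ => (↑F : Set (Sym2 V))) ?_ ?_ ?_ ?_
  · intro F hF
    obtain ⟨hFG, h⟩ := Finset.mem_filter.1 hF
    refine Finset.mem_filter.2 ⟨?_, h⟩
    simp only [Finset.bind_def, Finset.pure_def, Finset.mem_sup, Finset.mem_singleton]
    exact ⟨F, hFG, rfl⟩
  · intro F _ F' _ h
    exact Finset.coe_injective h
  · intro F hF
    obtain ⟨hFG, h⟩ := Finset.mem_filter.1 hF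
    simp only [Finset.bind_def, Finset.pure_def, Finset.mem_sup, Finset.mem_singleton] at hFG
    obtain ⟨F', hF', rfl⟩ := hFG
    exact ⟨F', Finset.mem_filter.2 ⟨hF', h⟩, rfl⟩
  · intro F _
    rw [Finset.toFinset_coe]

/-! ### Rooted forests as parent maps -/

section ParentMaps

variable {V : Type*} [Fintype V] [DecidableEq V] {W : Finset V}

/-- The edge set `{v, f v}`, `v ∉ W`, of a parent map `f` defined off the set of roots `W`. -/
noncomputable def parentEdges (f : {v : V // v ∉ W} → V) : Finset (Sym2 V) :=
  Finset.univ.image fun v => s(v.1, f v)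

/-- The self-map of `V` that moves a vertex to its parent and fixes the roots. -/
noncomputable def stepMap (f : {v : V // v ∉ W} → V) (v : V) : V :=
  if h : v ∉ W then f ⟨v, h⟩ else v

/-- A parent map is rooted if following parents always ends in `W`; on a finite vertex set this
amounts to having a height function that strictly decreases from a vertex to its parent. -/
def Rooted (f : {v : V // v ∉ W} → V) : Prop :=
  ∃ d : V → ℕ, ∀ v, d (f v) < d v.1

lemma stepMap_of_notMem (f : {v : V // v ∉ W} → V) (v : {v : V // v ∉ W}) :
    stepMap f v.1 = f v := by
  simp [stepMap, v.2]

lemma stepMap_of_mem (f : {v : V // v ∉ W} → V) {v : V} (h : v ∈ W) : stepMap f v = v := by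
  simp [stepMap, h]

lemma iterate_stepMap_of_mem (f : {v : V // v ∉ W} → V) {v : V} (h : v ∈ W) (k : ℕ) :
    (stepMap f)^[k] v = v :=
  Function.iterate_fixed (stepMap_of_mem f h) k

lemma mem_parentEdges {f : {v : V // v ∉ W} → V} {e : Sym2 V} :
    e ∈ parentEdges f ↔ ∃ v, s(v.1, f v) = e := by
  simp [parentEdges]

lemma Rooted.ne {f : {v : V // v ∉ W} → V} (hf : Rooted f) (v : {v : V // v ∉ W}) :
    v.1 ≠ f v := by
  obtain ⟨d, hd⟩ := hf
  intro h
  have := hd v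
  rw [← h] at this
  exact lt_irrefl _ this

/-- If two vertices shared their parent edge, they would be each other's parents. -/
lemma Rooted.injective_edge {f : {v : V // v ∉ W} → V} (hf : Rooted f) :
    Function.Injective fun v : {v : V // v ∉ W} => s(v.1, f v) := by
  obtain ⟨d, hd⟩ := hf
  intro u v h
  rcases Sym2.eq_iff.1 h with ⟨h1, _⟩ | ⟨h1, h2⟩
  · exact Subtype.ext h1
  · have a := hd u
    have b := hd v
    rw [h2] at a
    rw [← h1] at b
    omega

/-- A set of vertices closed under adjacency is closed under reachability. -/
lemma reachable_closed {V : Type*} {H : SimpleGraph V} {D : V → Prop}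
    (hD : ∀ a b, H.Adj a b → D a → D b) {a b : V} (h : H.Reachable a b) (ha : D a) : D b := by
  obtain ⟨p⟩ := h
  induction p with
  | nil => exact ha
  | cons hadj _ ih => exact ih (hD _ _ hadj ha)

/-- The descendants of `a` (the vertices from which following parents leads to `a`) form a set
that is left or entered only through the parent edge of `a`. -/
lemma descendant_step {f : {v : V // v ∉ W} → V} {a : V} (v : {v : V // v ∉ W})
    (hv : v.1 ≠ a) :
    (∃ k, (stepMap f)^[k] v.1 = a) ↔ ∃ k, (stepMap f)^[k] (f v) = a := by
  constructor
  · rintro ⟨k, hk⟩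
    cases k with
    | zero => exact absurd hk hv
    | succ k =>
      rw [Function.iterate_succ_apply, stepMap_of_notMem] at hk
      exact ⟨k, hk⟩
  · rintro ⟨k, hk⟩
    exact ⟨k + 1, by rw [Function.iterate_succ_apply, stepMap_of_notMem, hk]⟩

lemma fromEdgeSet_parentEdges_adj {f : {v : V // v ∉ W} → V} {a b : V}
    (h : (SimpleGraph.fromEdgeSet (↑(parentEdges f) : Set (Sym2 V))).Adj a b) :
    (∃ v : {v : V // v ∉ W}, v.1 = a ∧ f v = b) ∨
      ∃ v : {v : V // v ∉ W}, v.1 = b ∧ f v = a := by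
  rw [SimpleGraph.fromEdgeSet_adj] at h
  obtain ⟨v, hv⟩ := mem_parentEdges.1 (Finset.mem_coe.1 h.1)
  rcases Sym2.eq_iff.1 hv with h1 | h1
  · exact Or.inl ⟨v, h1⟩
  · exact Or.inr ⟨v, h1⟩

lemma Rooted.adj {f : {v : V // v ∉ W} → V} (hf : Rooted f) (v : {v : V // v ∉ W}) :
    (SimpleGraph.fromEdgeSet (↑(parentEdges f) : Set (Sym2 V))).Adj v.1 (f v) := by
  rw [SimpleGraph.fromEdgeSet_adj]
  exact ⟨Finset.mem_coe.2 (mem_parentEdges.2 ⟨v, rfl⟩), hf.ne v⟩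

/-- Following parents reaches `W`. -/
lemma Rooted.exists_reachable {f : {v : V // v ∉ W} → V} (hf : Rooted f) (v : V) :
    ∃ w ∈ W, (SimpleGraph.fromEdgeSet (↑(parentEdges f) : Set (Sym2 V))).Reachable v w := by
  obtain ⟨d, hd⟩ := id hf
  induction hn : d v using Nat.strong_induction_on generalizing v with
  | _ n ih =>
    by_cases hv : v ∈ W
    · exact ⟨v, hv, SimpleGraph.Reachable.refl _⟩
    · obtain ⟨w, hw, hr⟩ := ih _ (hn ▸ hd ⟨v, hv⟩) (f ⟨v, hv⟩) rfl
      exact ⟨w, hw, (hf.adj ⟨v, hv⟩).reachable.trans hr⟩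

/-- Distinct roots lie in distinct components: the descendants of a root are a union of
components and contain no other root. -/
lemma parentEdges_root_unique {f : {v : V // v ∉ W} → V} {w w' : V} (hw : w ∈ W)
    (hw' : w' ∈ W)
    (h : (SimpleGraph.fromEdgeSet (↑(parentEdges f) : Set (Sym2 V))).Reachable w w') :
    w' = w := by
  have key := reachable_closed (D := fun a => ∃ k, (stepMap f)^[k] a = w) ?_ h ⟨0, rfl⟩
  · obtain ⟨k, hk⟩ := key
    rwa [iterate_stepMap_of_mem f hw'] at hk
  · intro a b hab ha
    rcases fromEdgeSet_parentEdges_adj hab with ⟨v, rfl, rfl⟩ | ⟨v, rfl, rfl⟩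
    · exact (descendant_step v fun h => v.2 (h ▸ hw)).1 ha
    · exact (descendant_step v fun h => v.2 (h ▸ hw)).2 ha

/-- The parent edge of `v` is a bridge: it separates the descendants of `v` from the parent. -/
lemma Rooted.isBridge {f : {v : V // v ∉ W} → V} (hf : Rooted f) (v : {v : V // v ∉ W}) :
    (SimpleGraph.fromEdgeSet (↑(parentEdges f) : Set (Sym2 V))).IsBridge s(v.1, f v) := by
  obtain ⟨d, hd⟩ := id hf
  rw [SimpleGraph.isBridge_iff]
  intro h
  have key := reachable_closed (D := fun a => ∃ k, (stepMap f)^[k] a = v.1) ?_ h ⟨0, rfl⟩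
  · obtain ⟨k, hk⟩ := key
    have hstep : ∀ u, d (stepMap f u) ≤ d u := by
      intro u
      by_cases hu : u ∈ W
      · rw [stepMap_of_mem f hu]
      · rw [stepMap_of_notMem f ⟨u, hu⟩]
        exact (hd ⟨u, hu⟩).le
    have hiter : ∀ k u, d ((stepMap f)^[k] u) ≤ d u := by
      intro k
      induction k with
      | zero => intro u; exact le_rfl
      | succ k ih =>
        intro u
        rw [Function.iterate_succ_apply]
        exact (ih _).trans (hstep u)
    have h1 := hiter k (f v)
    rw [hk] at h1
    exact absurd (hd v) (not_lt.2 h1)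
  · intro a b hab ha
    rw [SimpleGraph.deleteEdges_adj] at hab
    rcases fromEdgeSet_parentEdges_adj hab.1 with ⟨u, rfl, rfl⟩ | ⟨u, rfl, rfl⟩
    · refine (descendant_step u fun h => hab.2 ?_).1 ha
      rw [Subtype.ext h]
      rfl
    · refine (descendant_step u fun h => hab.2 ?_).2 ha
      rw [Subtype.ext h]
      exact Sym2.eq_swap

lemma Rooted.isAcyclic {f : {v : V // v ∉ W} → V} (hf : Rooted f) :
    (SimpleGraph.fromEdgeSet (↑(parentEdges f) : Set (Sym2 V))).IsAcyclic := by
  rw [SimpleGraph.isAcyclic_iff_forall_adj_isBridge]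
  intro a b hab
  rcases fromEdgeSet_parentEdges_adj hab with ⟨v, rfl, rfl⟩ | ⟨v, rfl, rfl⟩
  · exact hf.isBridge v
  · rw [Sym2.eq_swap]
    exact hf.isBridge v

lemma Rooted.existsUnique_root {f : {v : V // v ∉ W} → V} (hf : Rooted f) (v : V) :
    ∃! w : V, w ∈ W ∧
      (SimpleGraph.fromEdgeSet (↑(parentEdges f) : Set (Sym2 V))).Reachable v w := by
  obtain ⟨w, hw, hr⟩ := hf.exists_reachable v
  exact ⟨w, ⟨hw, hr⟩, fun w' h => parentEdges_root_unique hw h.1 (hr.symm.trans h.2)⟩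

/-- A rooted parent map is determined by its edge set. -/
lemma Rooted.eq_of_parentEdges_eq {f g : {v : V // v ∉ W} → V} (hf : Rooted f)
    (h : parentEdges f = parentEdges g) : f = g := by
  obtain ⟨d, hd⟩ := hf
  suffices H : ∀ n, ∀ v : {v : V // v ∉ W}, d v.1 = n → f v = g v from
    funext fun v => H _ v rfl
  intro n
  induction n using Nat.strong_induction_on with
  | _ n ih =>
    intro v hn
    have hmem : s(v.1, f v) ∈ parentEdges g := h ▸ mem_parentEdges.2 ⟨v, rfl⟩
    obtain ⟨u, hu⟩ := mem_parentEdges.1 hmem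
    rcases Sym2.eq_iff.1 hu with ⟨h1, h2⟩ | ⟨h1, h2⟩
    · rw [← Subtype.ext h1, h2, Subtype.ext h1]
    · -- Here `f v = u` and `g u = v`; by induction `f u = v` as well, a 2-cycle of `f`.
      have hlt : d u.1 < d v.1 := h1 ▸ hd v
      have h3 := ih _ (hn ▸ hlt) u rfl
      have h4 := hd u
      rw [h3, h2] at h4
      omega

/-- Every forest with exactly one vertex of `W` in each component comes from a rooted parent
map: send each vertex to a neighbour closer to its root. -/
lemma exists_parentMap {F : Finset (Sym2 V)} (hloop : ∀ e ∈ F, ¬ e.IsDiag)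
    (hac : (SimpleGraph.fromEdgeSet (↑F : Set (Sym2 V))).IsAcyclic)
    (hroot : ∀ v : V, ∃! w : V, w ∈ W ∧
      (SimpleGraph.fromEdgeSet (↑F : Set (Sym2 V))).Reachable v w) :
    ∃ f : {v : V // v ∉ W} → V, Rooted f ∧ parentEdges f = F := by
  set H := SimpleGraph.fromEdgeSet (↑F : Set (Sym2 V)) with hH
  choose r hr huniq using hroot
  have hex : ∀ v : {v : V // v ∉ W}, ∃ u, H.Adj v.1 u ∧ H.dist u (r u) < H.dist v.1 (r v.1) := by
    intro v
    obtain ⟨p, hp⟩ := (hr v.1).2.exists_walk_length_eq_dist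
    have hne : v.1 ≠ r v.1 := fun h => v.2 (h.symm ▸ (hr v.1).1)
    obtain ⟨u, hadj, q, rfl⟩ := SimpleGraph.Walk.exists_eq_cons_of_ne hne p
    · refine ⟨u, hadj, ?_⟩
      have hru : r v.1 = r u := huniq u _ ⟨(hr v.1).1, ⟨q⟩⟩
      rw [← hru, ← hp, SimpleGraph.Walk.length_cons]
      exact Nat.lt_succ_of_le (SimpleGraph.dist_le q)
  choose f hadj hlt using hex
  have hf : Rooted f := ⟨fun v => H.dist v (r v), hlt⟩
  refine ⟨f, hf, ?_⟩
  have hsub : parentEdges f ⊆ F := by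
    intro e he
    obtain ⟨v, rfl⟩ := mem_parentEdges.1 he
    exact Finset.mem_coe.1 ((SimpleGraph.fromEdgeSet_adj _).1 (hadj v)).1
  have hle : SimpleGraph.fromEdgeSet (↑(parentEdges f) : Set (Sym2 V)) ≤ H :=
    SimpleGraph.fromEdgeSet_mono (Finset.coe_subset.2 hsub)
  refine Finset.Subset.antisymm hsub fun e he => ?_
  -- The ends of an edge of `F` are joined inside `parentEdges f` through their common root, so
  -- an edge outside `parentEdges f` would not be a bridge.
  by_contra hne
  induction e using Sym2.ind with
  | _ a b =>
    have hab : H.Adj a b :=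
      (SimpleGraph.fromEdgeSet_adj _).2 ⟨Finset.mem_coe.2 he, fun h => hloop _ he (by simpa using h)⟩
    refine SimpleGraph.isBridge_iff.1
      (SimpleGraph.isAcyclic_iff_forall_adj_isBridge.1 hac hab) ?_
    obtain ⟨w, hw, hwr⟩ := hf.exists_reachable a
    obtain ⟨w', hw', hwr'⟩ := hf.exists_reachable b
    have h1 : w = r b := huniq b _ ⟨hw, hab.symm.reachable.trans (hwr.mono hle)⟩
    have h2 : w' = r b := huniq b _ ⟨hw', hwr'.mono hle⟩
    have h3 : w = w' := h1.trans h2.symm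
    subst h3
    refine (hwr.trans hwr'.symm).mono fun c d hcd => ?_
    refine (SimpleGraph.deleteEdges_adj).2 ⟨hle hcd, fun h => hne ?_⟩
    have := ((SimpleGraph.fromEdgeSet_adj _).1 hcd).1
    rw [Set.mem_singleton_iff.1 h] at this
    exact Finset.mem_coe.1 this

/-- The forest sum `s(G/W;x)` as a sum over rooted parent maps. -/
lemma contractedSum_eq_sum_parentMap (G : SimpleGraph V) (x : Sym2 V → ZMod 3) (W : Finset V) :
    contractedSum G x W =
      ∑ f ∈ Finset.univ.filter
        (fun f : {v : V // v ∉ W} → V => Rooted f ∧ ∀ v, G.Adj v.1 (f v)),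
        ∏ v, x s(v.1, f v) := by
  rw [contractedSum_eq_sum_finset]
  symm
  refine Finset.sum_bij (fun f _ => parentEdges f) ?_ ?_ ?_ ?_
  · intro f hf
    obtain ⟨hf, hadj⟩ := (Finset.mem_filter.1 hf).2
    refine Finset.mem_filter.2 ⟨Finset.mem_powerset.2 fun e he => ?_, hf.isAcyclic,
      hf.existsUnique_root⟩
    obtain ⟨v, rfl⟩ := mem_parentEdges.1 he
    exact SimpleGraph.mem_edgeFinset.2 (hadj v)
  · intro f hf g _ h
    exact (Finset.mem_filter.1 hf).2.1.eq_of_parentEdges_eq h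
  · intro F hF
    obtain ⟨hFG, hac, hroot⟩ := Finset.mem_filter.1 hF
    have hFG := Finset.mem_powerset.1 hFG
    obtain ⟨f, hf, rfl⟩ := exists_parentMap
      (fun e he => G.not_isDiag_of_mem_edgeSet (SimpleGraph.mem_edgeFinset.1 (hFG he))) hac hroot
    refine ⟨f, Finset.mem_filter.2 ⟨Finset.mem_univ _, hf, fun v => ?_⟩, rfl⟩
    exact SimpleGraph.mem_edgeFinset.1 (hFG (mem_parentEdges.2 ⟨v, rfl⟩))
  · intro f hf
    rw [parentEdges, Finset.prod_image (fun u _ v _ h =>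
      (Finset.mem_filter.1 hf).2.1.injective_edge h)]

/-- The matrix `I - P` of a parent map, where `P` is the transition matrix restricted to the
non-roots. -/
noncomputable def parentMatrix (f : {v : V // v ∉ W} → V) :
    Matrix {v : V // v ∉ W} {v : V // v ∉ W} (ZMod 3) :=
  Matrix.of fun i j => (if j.1 = i.1 then 1 else 0) - (if j.1 = f i then 1 else 0)

/-- For a rooted parent map, `I - P` is unitriangular with respect to the height. -/
lemma Rooted.det_parentMatrix {f : {v : V // v ∉ W} → V} (hf : Rooted f) :
    (parentMatrix f).det = 1 := by
  obtain ⟨d, hd⟩ := hf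
  have htri : (parentMatrix f).BlockTriangular
      (fun v : {v : V // v ∉ W} => OrderDual.toDual (d v.1)) := by
    intro i j hij
    have hij : d i.1 < d j.1 := hij
    have h1 : j.1 ≠ i.1 := fun h => by rw [h] at hij; exact lt_irrefl _ hij
    have h2 : j.1 ≠ f i := fun h => by
      have := hd i
      rw [← h] at this
      omega
    simp [parentMatrix, h1, h2]
  rw [htri.det]
  refine Finset.prod_eq_one fun k _ => ?_
  suffices h : (parentMatrix f).toSquareBlock
      (fun v : {v : V // v ∉ W} => OrderDual.toDual (d v.1)) k = 1 by
    rw [h, Matrix.det_one]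
  ext i j
  have hij : d i.1.1 = d j.1.1 := OrderDual.toDual.injective (i.2.trans j.2.symm)
  have h2 : j.1.1 ≠ f i.1 := fun h => by
    have := hd i.1
    rw [← h] at this
    omega
  rw [Matrix.toSquareBlock_def]
  by_cases h : i = j
  · subst h
    simp [parentMatrix, h2]
  · have h1 : j.1.1 ≠ i.1.1 := fun h' => h (Subtype.ext (Subtype.ext h'.symm))
    simp [parentMatrix, h1, h2, Matrix.one_apply_ne h]

/-- Otherwise the indicator of the vertices that never reach `W` is in the kernel of `I - P`. -/
lemma det_parentMatrix_of_not_rooted {f : {v : V // v ∉ W} → V} (hf : ¬ Rooted f) :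
    (parentMatrix f).det = 0 := by
  set R : V → Prop := fun v => ∃ k, (stepMap f)^[k] v ∈ W with hR
  have hRW : ∀ v ∈ W, R v := fun v hv => ⟨0, hv⟩
  have hRf : ∀ v : {v : V // v ∉ W}, R v.1 ↔ R (f v) := by
    intro v
    constructor
    · rintro ⟨k, hk⟩
      cases k with
      | zero => exact absurd hk v.2
      | succ k =>
        rw [Function.iterate_succ_apply, stepMap_of_notMem] at hk
        exact ⟨k, hk⟩
    · rintro ⟨k, hk⟩
      exact ⟨k + 1, by rwa [Function.iterate_succ_apply, stepMap_of_notMem]⟩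
  have hbad : ∃ v, ¬ R v := by
    by_contra hall
    push Not at hall
    refine hf ⟨fun v => Nat.find (hall v), fun v => ?_⟩
    have hspec := Nat.find_spec (hall v.1)
    rcases hk : Nat.find (hall v.1) with _ | k
    · rw [hk] at hspec
      exact absurd hspec v.2
    · rw [hk, Function.iterate_succ_apply, stepMap_of_notMem] at hspec
      change Nat.find (hall (f v)) < Nat.find (hall v.1)
      rw [hk]
      exact Nat.lt_succ_of_le (Nat.find_min' (hall (f v)) hspec)
  obtain ⟨v, hv⟩ := hbad
  have hvW : v ∉ W := fun h => hv (hRW v h)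
  refine Matrix.exists_mulVec_eq_zero_iff.1
    ⟨fun u => if R u.1 then 0 else 1, fun h => ?_, ?_⟩
  · have := congrFun h ⟨v, hvW⟩
    simp [hv] at this
  · ext i
    have hsum : ∀ a : V, ∑ j : {v : V // v ∉ W},
        (if j.1 = a then (1 : ZMod 3) else 0) * (if R j.1 then 0 else 1) =
          if R a then 0 else 1 := by
      intro a
      by_cases ha : a ∈ W
      · rw [if_pos (hRW a ha)]
        refine Finset.sum_eq_zero fun j _ => ?_
        rw [if_neg (fun h : j.1 = a => j.2 (h ▸ ha)), zero_mul]
      · rw [Finset.sum_eq_single ⟨a, ha⟩]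
        · simp
        · intro j _ hj
          rw [if_neg (fun h : j.1 = a => hj (Subtype.ext h)), zero_mul]
        · simp
    simp only [Matrix.mulVec, dotProduct, parentMatrix, Matrix.of_apply, sub_mul,
      Finset.sum_sub_distrib, hsum, Pi.zero_apply]
    simp only [hRf i, sub_self]

end ParentMaps

/-! ### The weighted Laplacian and its principal minors -/

section Laplacian

variable {V : Type*} [Fintype V] [DecidableEq V]

/-- The weight of the ordered pair `(u, v)`: `x(uv)` on edges of `G` and `0` elsewhere. -/
noncomputable def pairWeight (G : SimpleGraph V) (x : Sym2 V → ZMod 3) (u v : V) : ZMod 3 :=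
  if G.Adj u v then x s(u, v) else 0

/-- The weighted Laplacian of `G`, with row `i` written as `∑ z, x(iz) (e_i - e_z)`. -/
noncomputable def weightedLap (G : SimpleGraph V) (x : Sym2 V → ZMod 3) :
    Matrix V V (ZMod 3) :=
  Matrix.of fun i j => ∑ z, pairWeight G x i z *
    ((if j = i then 1 else 0) - (if j = z then 1 else 0))

lemma weightedLap_symm (G : SimpleGraph V) (x : Sym2 V → ZMod 3) (i j : V) :
    weightedLap G x i j = weightedLap G x j i := by
  by_cases h : i = j
  · rw [h]
  · have key : ∀ a b : V, a ≠ b → weightedLap G x a b = - pairWeight G x a b := by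
      intro a b hab
      simp [weightedLap, hab.symm]
    rw [key i j h, key j i (Ne.symm h)]
    simp [pairWeight, G.adj_comm i j, Sym2.eq_swap (a := i) (b := j)]

lemma det_weightedLap [Nonempty V] (G : SimpleGraph V) (x : Sym2 V → ZMod 3) :
    (weightedLap G x).det = 0 := by
  refine Matrix.exists_mulVec_eq_zero_iff.1 ⟨fun _ => 1, fun h => ?_, ?_⟩
  · have := congrFun h (Classical.arbitrary V)
    simp at this
  · ext i
    simp only [Matrix.mulVec, dotProduct, weightedLap, Matrix.of_apply, mul_one, Pi.zero_apply]
    rw [Finset.sum_comm]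
    refine Finset.sum_eq_zero fun z _ => ?_
    rw [← Finset.mul_sum]
    simp

/-- The matrix-tree theorem for principal minors: expanding the determinant multilinearly in its
rows leaves one term for each parent map, which is its weight if the map is rooted and `0`
otherwise. -/
lemma contractedSum_eq_det (G : SimpleGraph V) (x : Sym2 V → ZMod 3) (W : Finset V) :
    contractedSum G x W =
      ((weightedLap G x).submatrix (fun v : {v : V // v ∉ W} => v.1) (fun v => v.1)).det := by
  have hrow : (weightedLap G x).submatrix (fun v : {v : V // v ∉ W} => v.1) (fun v => v.1) =
      fun i : {v : V // v ∉ W} => ∑ z : V, pairWeight G x i.1 z •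
        fun j : {v : V // v ∉ W} =>
          ((if j.1 = i.1 then 1 else 0) - (if j.1 = z then 1 else 0) : ZMod 3) := by
    ext i j
    simp [weightedLap, Finset.sum_apply]
  have hexp : ((weightedLap G x).submatrix (fun v : {v : V // v ∉ W} => v.1)
      (fun v => v.1)).det = ∑ f : {v : V // v ∉ W} → V,
        (∏ v, pairWeight G x v.1 (f v)) * (parentMatrix f).det := by
    rw [hrow]
    refine ((Matrix.detRowAlternating (R := ZMod 3)
      (n := {v : V // v ∉ W})).toMultilinearMap.map_sum _).trans ?_
    refine Finset.sum_congr rfl fun f _ => ?_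
    exact MultilinearMap.map_smul_univ _ _ _
  rw [hexp, contractedSum_eq_sum_parentMap, Finset.sum_filter]
  refine Finset.sum_congr rfl fun f _ => ?_
  by_cases hf : Rooted f
  · rw [hf.det_parentMatrix, mul_one]
    by_cases hadj : ∀ v, G.Adj v.1 (f v)
    · rw [if_pos ⟨hf, hadj⟩]
      exact Finset.prod_congr rfl fun v _ => by rw [pairWeight, if_pos (hadj v)]
    · rw [if_neg (fun h => hadj h.2)]
      push Not at hadj
      obtain ⟨v, hv⟩ := hadj
      exact (Finset.prod_eq_zero (Finset.mem_univ v) (by rw [pairWeight, if_neg hv])).symm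
  · rw [det_parentMatrix_of_not_rooted hf, mul_zero, if_neg (fun h => hf h.1)]

lemma det_submatrix_eq_contractedSum (G : SimpleGraph V) (x : Sym2 V → ZMod 3)
    {ι : Type*} [Fintype ι] [DecidableEq ι] (g : ι → V) (hg : Function.Injective g) :
    ((weightedLap G x).submatrix g g).det =
      contractedSum G x (Finset.univ \ Finset.univ.image g) := by
  rw [contractedSum_eq_det]
  let e : ι ≃ {v : V // v ∉ Finset.univ \ Finset.univ.image g} :=
    Equiv.ofBijective (fun i => ⟨g i, by simp⟩)
      ⟨fun a b h => hg (congrArg Subtype.val h), fun v => by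
        obtain ⟨v, hv⟩ := v
        simp only [Finset.mem_sdiff, Finset.mem_univ, true_and, not_not, Finset.mem_image] at hv
        obtain ⟨i, hi⟩ := hv
        exact ⟨i, Subtype.ext hi⟩⟩
  exact Matrix.det_submatrix_equiv_self e ((weightedLap G x).submatrix
    (fun v : {v : V // v ∉ Finset.univ \ Finset.univ.image g} => v.1) (fun v => v.1))

end Laplacian

/-! ### Maximal nonsingular principal submatrices -/

/-- If `S` indexes a nonsingular principal submatrix of a symmetric matrix `A`, and all principal
submatrices obtained by adjoining one or two indices are singular, then the Schur complement of
`A[S]` vanishes, i.e. `A = A[·,S] A[S]⁻¹ A[S,·]`: its diagonal entries and its `2 × 2` principal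
minors are quotients of such minors. -/
lemma schur_eq_zero {V S K : Type*} [Field K] [Fintype S] [DecidableEq S]
    (A : Matrix V V K) (hA : ∀ i j, A i j = A j i) (s : S → V)
    (hdet : (A.submatrix s s).det ≠ 0)
    (hone : ∀ t : Fin 1 → V, (A.submatrix (Sum.elim s t) (Sum.elim s t)).det = 0)
    (htwo : ∀ t : Fin 2 → V, (A.submatrix (Sum.elim s t) (Sum.elim s t)).det = 0) (i j : V) :
    A i j = (A.submatrix id s * (A.submatrix s s)⁻¹ * A.submatrix s id) i j := by
  let B : Matrix V V K := A - A.submatrix id s * (A.submatrix s s)⁻¹ * A.submatrix s id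
  have hAs : (A.submatrix s s)ᵀ = A.submatrix s s := by
    ext a b; exact hA _ _
  have hAs1 : (A.submatrix s id)ᵀ = A.submatrix id s := by
    ext a b; exact hA _ _
  have hBt : Bᵀ = B := by
    have hAs2 : (A.submatrix id s)ᵀ = A.submatrix s id := by
      ext a b; exact hA _ _
    have hAt : Aᵀ = A := by
      ext a b; exact hA _ _
    simp only [B, Matrix.transpose_sub, Matrix.transpose_mul, Matrix.transpose_nonsing_inv, hAs,
      hAs1, hAs2, hAt, Matrix.mul_assoc]
  have hblock : ∀ n (t : Fin n → V),
      (A.submatrix (Sum.elim s t) (Sum.elim s t)).det =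
        (A.submatrix s s).det * (B.submatrix t t).det := by
    intro n t
    have := Matrix.invertibleOfIsUnitDet (A.submatrix s s) (isUnit_iff_ne_zero.2 hdet)
    have h1 : A.submatrix (Sum.elim s t) (Sum.elim s t) =
        Matrix.fromBlocks (A.submatrix s s) (A.submatrix s t) (A.submatrix t s)
          (A.submatrix t t) := by
      ext (a | a) (b | b) <;> rfl
    rw [h1, Matrix.det_fromBlocks₁₁, Matrix.invOf_eq_nonsing_inv]
    rfl
  have hB1 : ∀ i, B i i = 0 := by
    intro i
    have h := hone fun _ => i
    rw [hblock] at h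
    simpa [hdet] using h
  have hij : B i j = 0 := by
    have h := htwo ![i, j]
    rw [hblock] at h
    have hsymm : B j i = B i j := congrFun (congrFun hBt i) j
    rw [Matrix.det_fin_two] at h
    simpa [hdet, hB1, hsymm] using h
  exact sub_eq_zero.1 hij

/-- In the situation of `schur_eq_zero`, two principal minors of the same size differ by a square
factor. -/
lemma det_eq_sq_mul_det {V S K : Type*} [Field K] [Fintype S] [DecidableEq S]
    (A : Matrix V V K) (hA : ∀ i j, A i j = A j i) (s t : S → V)
    (hdet : (A.submatrix s s).det ≠ 0)
    (hone : ∀ t : Fin 1 → V, (A.submatrix (Sum.elim s t) (Sum.elim s t)).det = 0)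
    (htwo : ∀ t : Fin 2 → V, (A.submatrix (Sum.elim s t) (Sum.elim s t)).det = 0) :
    ∃ c : K, (A.submatrix t t).det * (A.submatrix s s).det = c ^ 2 := by
  have h : A.submatrix t t = A.submatrix t s * (A.submatrix s s)⁻¹ * A.submatrix s t := by
    ext i j
    exact schur_eq_zero A hA s hdet hone htwo (t i) (t j)
  have h2 : A.submatrix s t = (A.submatrix t s)ᵀ := by
    ext i j
    exact hA _ _
  refine ⟨(A.submatrix t s).det, ?_⟩
  rw [h, h2, Matrix.det_mul, Matrix.det_mul, Matrix.det_transpose, Matrix.det_nonsing_inv,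
    Ring.inverse_eq_inv']
  field_simp

/-- Any two minimal-cardinality contraction sets with nonvanishing contracted
spanning-tree sum give the same value of that sum. -/
theorem s_min_independent {V : Type*} [Fintype V] [DecidableEq V] (G : SimpleGraph V)
    (hG : G.Connected) (x : Sym2 V → ZMod 3) (m : ℕ)
    (hmin : ∀ W : Finset V, sCon G x W ≠ 0 → m ≤ W.card)
    (W₁ W₂ : Finset V) (h₁ : W₁.card = m) (h₂ : W₂.card = m)
    (hne₁ : sCon G x W₁ ≠ 0) (hne₂ : sCon G x W₂ ≠ 0) :
    sCon G x W₁ = sCon G x W₂ := by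
  by_cases hm : m = 0
  · subst hm
    rw [Finset.card_eq_zero.1 h₁, Finset.card_eq_zero.1 h₂]
  have := hG.nonempty
  have hcon : ∀ W : Finset V, W.card = m → sCon G x W = contractedSum G x W := by
    intro W hW
    rw [sCon, if_neg]
    rintro rfl
    exact hm (by simpa using hW.symm)
  rw [hcon W₁ h₁, contractedSum_eq_det] at hne₁ ⊢
  rw [hcon W₂ h₂, contractedSum_eq_det] at hne₂ ⊢
  set A := weightedLap G x with hAdef
  have hcard₁ : Fintype.card {v : V // v ∉ W₁} + m = Fintype.card V := by
    rw [Fintype.card_subtype_compl, Fintype.card_coe, h₁]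
    exact Nat.sub_add_cancel (h₁ ▸ W₁.card_le_univ)
  have hcard₂ : Fintype.card {v : V // v ∉ W₂} + m = Fintype.card V := by
    rw [Fintype.card_subtype_compl, Fintype.card_coe, h₂]
    exact Nat.sub_add_cancel (h₂ ▸ W₂.card_le_univ)
  -- By minimality of `m`, every principal minor with more than `|V| - m` indices vanishes.
  have hbig : ∀ n, 0 < n → ∀ t : Fin n → V,
      (A.submatrix (Sum.elim (fun v : {v : V // v ∉ W₁} => v.1) t)
        (Sum.elim (fun v : {v : V // v ∉ W₁} => v.1) t)).det = 0 := by
    intro n hn t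
    set g : {v : V // v ∉ W₁} ⊕ Fin n → V := Sum.elim (fun v => v.1) t with hg
    by_cases hinj : Function.Injective g
    · have hdet := det_submatrix_eq_contractedSum G x g hinj
      have hc : (Finset.univ \ Finset.univ.image g).card + (Fintype.card {v : V // v ∉ W₁} + n)
          = Fintype.card V := by
        have := Finset.card_sdiff_add_card_eq_card (Finset.subset_univ (Finset.univ.image g))
        rwa [Finset.card_image_of_injective _ hinj, Finset.card_univ, Finset.card_univ,
          Fintype.card_sum, Fintype.card_fin] at this
      by_cases hempty : Finset.univ \ Finset.univ.image g = ∅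
      · -- The minor is the full determinant; the Laplacian is singular.
        have hbij : Function.Bijective g := by
          refine ⟨hinj, fun v => ?_⟩
          have := Finset.sdiff_eq_empty_iff_subset.1 hempty (Finset.mem_univ v)
          simpa using this
        have := Matrix.det_submatrix_equiv_self (Equiv.ofBijective g hbij) A
        rw [hAdef, det_weightedLap] at this
        exact this
      · by_contra hne
        rw [hAdef, hdet] at hne
        have := hmin _ (by rwa [sCon, if_neg hempty])
        omega
    · rw [Function.Injective] at hinj
      push Not at hinj
      obtain ⟨a, b, hab, hne⟩ := hinj
      refine Matrix.det_zero_of_row_eq hne ?_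
      ext c
      simp [hab]
  obtain ⟨e⟩ : Nonempty ({v : V // v ∉ W₁} ≃ {v : V // v ∉ W₂}) :=
    Fintype.card_eq.1 (by omega)
  obtain ⟨c, hc⟩ := det_eq_sq_mul_det A (weightedLap_symm G x)
    (fun v : {v : V // v ∉ W₁} => v.1) (fun v => (e v).1) hne₁ (hbig 1 one_pos)
    (hbig 2 two_pos)
  have he : (A.submatrix (fun v => (e v).1) (fun v => (e v).1)).det =
      (A.submatrix (fun v : {v : V // v ∉ W₂} => v.1) (fun v => v.1)).det :=
    Matrix.det_submatrix_equiv_self e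
      (A.submatrix (fun v : {v : V // v ∉ W₂} => v.1) (fun v => v.1))
  rw [he] at hc
  -- Nonzero elements of `ZMod 3` whose product is a square are equal.
  have hZ : ∀ a b c : ZMod 3, a ≠ 0 → b ≠ 0 → a * b = c ^ 2 → b = a := by decide
  exact hZ _ _ c hne₂ hne₁ hc
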